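/- Let k ≥ 2 be an even integer and N a positive multiple of k. Let C_m denote the single-column SU(N) Young diagram with m boxes. Then: (i) |C_{k/2}| = k/2 and |C_{N−k/2}| = N − k/2 are both congruent to k/2 modulo k; (ii) in the normalization C₂(R) = ∑_{i=1}^{N−1} R_i(R_i − 2i + N), the two diagrams have equal quadratic Casimir, C₂(C_{k/2}) = C₂(C_{N−k/2}) = (k/2)(N − k/2); (iii) the charge conjugate of C_{k/2} is C_{N−k/2}; and (iv) if k < N then C_{k/2} ≠ C_{N−k/2}. Hence for k < N the orbifold SU(N)/Z_k theory with discrete θ-angle κ = k/2 has two distinct degenerate vacua exchanged by charge conjugation. -/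

import Mathlib

/-- The charge conjugate of an `SU(N)` Young diagram `R` (indexed by `1,…,N`):
`R̄ j = R 1 - R (N + 1 - j)`. -/
def conjYD (N : ℕ) (R : ℕ → ℕ) : ℕ → ℕ := fun j => R 1 - R (N + 1 - j)

/-- The single-column `SU(N)` Young diagram with `m` boxes:
`C_m(i) = 1` for `i ≤ m` and `0` otherwise. -/
def col (m : ℕ) : ℕ → ℕ := fun i => if i ≤ m then 1 else 0

/-! Conjugating a column of `m` boxes gives the complementary column of `N - m` boxes, and the
Casimir `m * (N - m)` of a column is symmetric under this exchange. Both columns lie in the same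
class of sizes modulo `k ∣ N` as soon as `k ∣ 2 * m`; the value `m = k / 2` achieves this, and the
columns differ unless `N = k`. -/

/-- The size `|R|`, i.e. the number of boxes, of an `SU(N)` Young diagram `R` (indexed by
`1,…,N`). -/
def sizeYD (N : ℕ) (R : ℕ → ℕ) : ℕ := ∑ i ∈ Finset.Icc 1 N, R i

/-- The quadratic Casimir `C₂(R)` of an `SU(N)` Young diagram `R`, whose minimizers among the
surviving representations are the vacua. It is integer-valued to avoid truncated subtraction. The
`N`-th row is left out of the sum, so the value is meaningful only when `R N = 0`. -/
def casimirYD (N : ℕ) (R : ℕ → ℕ) : ℤ :=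
  ∑ i ∈ Finset.Icc 1 (N - 1), (R i : ℤ) * ((R i : ℤ) - 2 * (i : ℤ) + (N : ℤ))

section Column

variable {m N i : ℕ}

theorem col_eq_one_iff : col m i = 1 ↔ i ≤ m := by
  simp [col]

theorem col_injective : Function.Injective col := fun _ _ h =>
  eq_of_forall_le_iff fun i => by rw [← col_eq_one_iff, h, col_eq_one_iff]

theorem sum_col_mul {A : Type*} [NonAssocSemiring A] (h : m ≤ N) (f : ℕ → A) :
    ∑ i ∈ Finset.Icc 1 N, (col m i : A) * f i = ∑ i ∈ Finset.Icc 1 m, f i := by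
  have hfilter : {i ∈ Finset.Icc 1 N | i ≤ m} = Finset.Icc 1 m := by
    ext i
    simp only [Finset.mem_filter, Finset.mem_Icc]
    omega
  simp only [col, Nat.cast_ite, Nat.cast_one, Nat.cast_zero, ite_mul, one_mul, zero_mul,
    ← Finset.sum_filter, hfilter]

theorem sizeYD_col (h : m ≤ N) : sizeYD N (col m) = m := by
  simpa [sizeYD] using sum_col_mul h (1 : ℕ → ℕ)

theorem sum_Icc_one_sub_two_mul_add {A : Type*} [CommRing A] (a : A) (m : ℕ) :
    ∑ i ∈ Finset.Icc 1 m, (1 - 2 * (i : A) + a) = m * (a - m) := by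
  induction m with
  | zero => simp
  | succ m ih =>
    rw [Finset.sum_Icc_succ_top (Nat.le_add_left 1 m), ih]
    push_cast
    ring

theorem casimirYD_col (h : m < N) : casimirYD N (col m) = m * ((N : ℤ) - m) := by
  calc casimirYD N (col m)
      = ∑ i ∈ Finset.Icc 1 m, ((col m i : ℤ) - 2 * i + N) := sum_col_mul (Nat.le_sub_one_of_lt h) _
    _ = ∑ i ∈ Finset.Icc 1 m, (1 - 2 * (i : ℤ) + N) :=
        Finset.sum_congr rfl fun i hi => by
          rw [col_eq_one_iff.mpr (Finset.mem_Icc.mp hi).2, Nat.cast_one]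
    _ = m * ((N : ℤ) - m) := sum_Icc_one_sub_two_mul_add _ m

theorem casimirYD_col_sub (hm : 0 < m) (h : m ≤ N) :
    casimirYD N (col (N - m)) = m * ((N : ℤ) - m) := by
  rw [casimirYD_col (Nat.sub_lt (hm.trans_le h) hm), Nat.cast_sub h]
  ring

-- An equality of functions: the two sides also agree at the meaningless indices `0` and `j > N`.
theorem conjYD_col (hm : 0 < m) (h : m ≤ N) : conjYD N (col m) = col (N - m) := by
  funext j
  have hrow : N + 1 - j ≤ m ↔ ¬ j ≤ N - m := by omega
  by_cases hj : j ≤ N - m <;> simp [conjYD, col, hrow, hj, Nat.one_le_iff_ne_zero.mpr hm.ne']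

end Column

theorem sub_modEq_self_of_dvd_two_mul {k m N : ℕ} (h : m ≤ N) (hN : k ∣ N) (hm : k ∣ 2 * m) :
    N - m ≡ m [MOD k] := by
  refine Nat.ModEq.add_right_cancel' m ?_
  rw [Nat.sub_add_cancel h, ← two_mul]
  exact (Nat.modEq_zero_iff_dvd.mpr hN).trans (Nat.modEq_zero_iff_dvd.mpr hm).symm

/-- In the orbifold `SU(N)/ℤ_k` theory with discrete θ-angle `κ = k/2` (for `k`
even, `N` a positive multiple of `k`): the single-column diagrams with `k/2` and
`N − k/2` boxes both survive (sizes `≡ k/2 (mod k)`), have equal quadratic Casimir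
`(k/2)(N − k/2)`, are exchanged by charge conjugation, and are distinct when
`k < N` — two degenerate vacua exchanged by charge conjugation. -/
theorem degenerate_vacua_charge_conjugation
    (k N : ℕ) (hk : 2 ≤ k) (hke : 2 ∣ k) (hN : 0 < N) (hkN : k ∣ N) :
    ((∑ i ∈ Finset.Icc 1 N, col (k / 2) i = k / 2) ∧
      (∑ i ∈ Finset.Icc 1 N, col (N - k / 2) i = N - k / 2) ∧
      k / 2 ≡ k / 2 [MOD k] ∧ (N - k / 2) ≡ k / 2 [MOD k]) ∧
    ((∑ i ∈ Finset.Icc 1 (N - 1),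
          (col (k / 2) i : ℤ) * ((col (k / 2) i : ℤ) - 2 * (i : ℤ) + (N : ℤ))
        = ((k / 2 : ℕ) : ℤ) * ((N : ℤ) - ((k / 2 : ℕ) : ℤ))) ∧
      (∑ i ∈ Finset.Icc 1 (N - 1),
          (col (N - k / 2) i : ℤ) * ((col (N - k / 2) i : ℤ) - 2 * (i : ℤ) + (N : ℤ))
        = ((k / 2 : ℕ) : ℤ) * ((N : ℤ) - ((k / 2 : ℕ) : ℤ)))) ∧
    (∀ j, 1 ≤ j → j ≤ N → conjYD N (col (k / 2)) j = col (N - k / 2) j) ∧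
    (k < N → col (k / 2) ≠ col (N - k / 2)) := by
  have two_mul_k_half : 2 * (k / 2) = k := Nat.mul_div_cancel' hke
  have k_half_pos : 0 < k / 2 := by omega
  have k_half_lt : k / 2 < N :=
    (Nat.div_lt_self (by omega) one_lt_two).trans_le (Nat.le_of_dvd hN hkN)
  refine ⟨⟨sizeYD_col k_half_lt.le, sizeYD_col (Nat.sub_le N _), Nat.ModEq.refl _,
      sub_modEq_self_of_dvd_two_mul k_half_lt.le hkN two_mul_k_half.symm.dvd⟩,
    ⟨casimirYD_col k_half_lt, casimirYD_col_sub k_half_pos k_half_lt.le⟩,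
    fun j _ _ => congrFun (conjYD_col k_half_pos k_half_lt.le) j, fun hlt => ?_⟩
  have k_half_ne : k / 2 ≠ N - k / 2 := by omega
  exact col_injective.ne k_half_ne
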